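/- Given two real numbers b < c and two arbitrary sequences (q_n), (p_n) of complex numbers, there exists an infinitely differentiable function g : [b, c] → ℂ with g^{(n)}(b) = q_n and g^{(n)}(c) = p_n for all n ≥ 0. -/

import Mathlib

open Complex Metric Set

/-!
By Borel's lemma, any sequence is the sequence of derivatives at a given point of a smooth function
on `ℝ`. To see this at `0`, cut the monomial `(xⁿ / n!) • qₙ` off to a compactly supported `h`, and
replace `h` by `x ↦ L⁻ⁿ • h (L * x)`. This multiplies the `k`-th derivative by `Lᵏ⁻ⁿ`, at `0` and in
sup norm: the only nonzero derivative at `0`, that of order `n`, is unchanged, while for `L` large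
all derivatives of order `k < n` are at most `2⁻ⁿ`. Hence the sum over `n` can be differentiated
termwise. Finally, two functions with the prescribed derivatives at `b` and at `c` respectively are
glued by a bump function at `b`.
-/

open Filter
open scoped ContDiff Nat Topology

section Bump

variable {E F : Type*} [NormedAddCommGroup E] [NormedSpace ℝ E]
  [NormedAddCommGroup F] [NormedSpace ℝ F] {n : ℕ∞}

lemma exists_contDiff_hasCompactSupport_eventuallyEq [FiniteDimensional ℝ E] {f : E → F}
    (hf : ContDiff ℝ n f) (x₀ : E) :
    ∃ g : E → F, ContDiff ℝ n g ∧ HasCompactSupport g ∧ g =ᶠ[𝓝 x₀] f := by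
  let χ : ContDiffBump x₀ := default
  refine ⟨fun x => χ x • f x, χ.contDiff.smul hf, χ.hasCompactSupport.smul_right, ?_⟩
  filter_upwards [χ.eventuallyEq_one] with x hx
  simp [hx]

lemma exists_contDiff_eventuallyEq_eventuallyEq [HasContDiffBump E] {b c : E} (hbc : b ≠ c)
    {u w : E → F} (hu : ContDiff ℝ n u) (hw : ContDiff ℝ n w) :
    ∃ g : E → F, ContDiff ℝ n g ∧ g =ᶠ[𝓝 b] u ∧ g =ᶠ[𝓝 c] w := by
  have hdist : 0 < dist c b := dist_pos.2 hbc.symm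
  let χ : ContDiffBump b := ⟨dist c b / 3, dist c b / 2, by positivity, by linarith⟩
  have hχc : ∀ᶠ x in 𝓝 c, χ x = 0 := by
    have hfar : ∀ᶠ x in 𝓝 c, dist c b / 2 < dist x b :=
      (continuous_id.dist continuous_const).continuousAt.eventually_const_lt (half_lt_self hdist)
    filter_upwards [hfar] with x hx using χ.zero_of_le_dist hx.le
  refine ⟨fun x => χ x • u x + (1 - χ x) • w x,
    (χ.contDiff.smul hu).add ((contDiff_const.sub χ.contDiff).smul hw), ?_, ?_⟩
  · filter_upwards [χ.eventuallyEq_one] with x hx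
    simp [hx]
  · filter_upwards [hχc] with x hx
    simp [hx]

end Bump

section IteratedDeriv

variable {𝕜 F : Type*} [NontriviallyNormedField 𝕜] [NormedAddCommGroup F] [NormedSpace 𝕜 F]

lemma iteratedDeriv_pow_smul_const_zero (k n : ℕ) (v : F) :
    iteratedDeriv k (fun x : 𝕜 => x ^ n • v) 0 = if k = n then (n ! : 𝕜) • v else 0 := by
  rw [iteratedDeriv_smul_const (by fun_prop), iteratedDeriv_fun_pow_zero]
  split_ifs <;> simp

lemma iteratedDeriv_const_smul_comp_const_mul {k : ℕ} {h : 𝕜 → F} (hh : ContDiff 𝕜 k h)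
    (a L x : 𝕜) :
    iteratedDeriv k (fun y => a • h (L * y)) x = (L ^ k * a) • iteratedDeriv k h (L * x) := by
  rw [iteratedDeriv_fun_const_smul_field, iteratedDeriv_comp_const_smul hh, smul_smul, mul_comm]

lemma exists_norm_iteratedDeriv_le_of_hasCompactSupport {k : ℕ} {h : 𝕜 → F}
    (hh : ContDiff 𝕜 k h) (hsupp : HasCompactSupport h) :
    ∃ C, ∀ x, ‖iteratedDeriv k h x‖ ≤ C := by
  simpa only [norm_iteratedFDeriv_eq_norm_iteratedDeriv] using
    (hh.continuous_iteratedFDeriv le_rfl).bounded_above_of_compact_support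
      (hsupp.iteratedFDeriv k)

end IteratedDeriv

section Series

lemma exists_summable_norm_le_of_eventually {ι α F : Type*} [NormedAddCommGroup F]
    {f : ι → α → F} {u : ι → ℝ} (hu : Summable u) (hbdd : ∀ i, ∃ C, ∀ x, ‖f i x‖ ≤ C)
    (hfu : ∀ᶠ i in cofinite, ∀ x, ‖f i x‖ ≤ u i) :
    ∃ v : ι → ℝ, Summable v ∧ ∀ i x, ‖f i x‖ ≤ v i := by
  classical
  choose C hC using hbdd
  refine ⟨fun i => if ∀ x, ‖f i x‖ ≤ u i then u i else C i, hu.congr_cofinite ?_, fun i x => ?_⟩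
  · filter_upwards [hfu] with i hi
    rw [if_pos hi]
  · dsimp only
    split_ifs with hi
    exacts [hi x, hC i x]

variable {ι 𝕜 F : Type*} [NontriviallyNormedField 𝕜] [IsRCLikeNormedField 𝕜]
  [NormedAddCommGroup F] [NormedSpace 𝕜 F] [CompleteSpace F] {N : ℕ∞} {f : ι → 𝕜 → F}
  {v : ℕ → ι → ℝ}

lemma contDiff_tsum_of_norm_iteratedDeriv_le (hf : ∀ i, ContDiff 𝕜 N (f i))
    (hv : ∀ k : ℕ, k ≤ N → Summable (v k))
    (hfv : ∀ (k : ℕ) i x, k ≤ N → ‖iteratedDeriv k (f i) x‖ ≤ v k i) :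
    ContDiff 𝕜 N fun x => ∑' i, f i x :=
  contDiff_tsum hf hv fun k i x hk =>
    norm_iteratedFDeriv_eq_norm_iteratedDeriv.trans_le (hfv k i x hk)

lemma iteratedDeriv_tsum_apply (hf : ∀ i, ContDiff 𝕜 N (f i))
    (hv : ∀ k : ℕ, k ≤ N → Summable (v k))
    (hfv : ∀ (k : ℕ) i x, k ≤ N → ‖iteratedDeriv k (f i) x‖ ≤ v k i) {k : ℕ} (hk : k ≤ N)
    (x : 𝕜) :
    iteratedDeriv k (fun y => ∑' i, f i y) x = ∑' i, iteratedDeriv k (f i) x := by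
  simp only [← norm_iteratedFDeriv_eq_norm_iteratedDeriv] at hfv
  have hsum : Summable fun i => iteratedFDeriv 𝕜 k (f i) x :=
    .of_norm_bounded (hv k hk) fun i => hfv k i x hk
  simp only [iteratedDeriv_eq_iteratedFDeriv]
  rw [iteratedFDeriv_tsum_apply hf hv hfv hk, ContinuousMultilinearMap.tsum_eval hsum]

end Series

section Borel

variable {F : Type*} [NormedAddCommGroup F] [NormedSpace ℝ F]

lemma exists_pos_forall_norm_iteratedDeriv_rescale_le {n : ℕ} {h : ℝ → F} (hh : ContDiff ℝ n h)
    (hbdd : ∀ k < n, ∃ C, ∀ x, ‖iteratedDeriv k h x‖ ≤ C) {ε : ℝ} (hε : 0 < ε) :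
    ∃ L > 0, ∀ k < n, ∀ x, ‖iteratedDeriv k (fun y => (L ^ n)⁻¹ • h (L * y)) x‖ ≤ ε := by
  choose! C hC using hbdd
  have hsmall : ∀ᶠ L : ℝ in atTop, ∀ k ∈ Finset.range n, L ^ k / L ^ n * C k < ε := by
    refine (eventually_all_finset _).2 fun k hk => Tendsto.eventually_lt_const hε ?_
    simpa only [zero_mul] using
      (tendsto_pow_div_pow_atTop_zero (Finset.mem_range.1 hk)).mul_const (C k)
  obtain ⟨L, hLε, hL⟩ := (hsmall.and (eventually_gt_atTop 0)).exists
  refine ⟨L, hL, fun k hk x => ?_⟩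
  calc ‖iteratedDeriv k (fun y => (L ^ n)⁻¹ • h (L * y)) x‖
      = L ^ k / L ^ n * ‖iteratedDeriv k h (L * x)‖ := by
        rw [iteratedDeriv_const_smul_comp_const_mul (hh.of_le (mod_cast hk.le)), norm_smul,
          ← div_eq_mul_inv, Real.norm_of_nonneg (by positivity)]
    _ ≤ L ^ k / L ^ n * C k := by gcongr; exact hC k hk _
    _ ≤ ε := (hLε k (Finset.mem_range.2 hk)).le

lemma exists_contDiff_hasCompactSupport_iteratedDeriv_zero_eq_ite (n : ℕ) (a : F) {ε : ℝ}
    (hε : 0 < ε) :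
    ∃ f : ℝ → F, ContDiff ℝ ∞ f ∧ HasCompactSupport f ∧
      (∀ k < n, ∀ x, ‖iteratedDeriv k f x‖ ≤ ε) ∧
      ∀ k, iteratedDeriv k f 0 = if k = n then a else 0 := by
  obtain ⟨h, hh, hsupp, hmonomial⟩ := exists_contDiff_hasCompactSupport_eventuallyEq
    (f := fun x : ℝ => x ^ n • (n ! : ℝ)⁻¹ • a) (n := ⊤) (by fun_prop) 0
  have hh' (k : ℕ) : ContDiff ℝ k h := hh.of_le (mod_cast le_top)
  obtain ⟨L, hL, hsmall⟩ := exists_pos_forall_norm_iteratedDeriv_rescale_le (hh' n)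
    (fun k _ => exists_norm_iteratedDeriv_le_of_hasCompactSupport (hh' k) hsupp) hε
  refine ⟨fun x => (L ^ n)⁻¹ • h (L * x), by fun_prop, ?_, hsmall, fun k => ?_⟩
  · exact (hsupp.comp_smul hL.ne').smul_left (f := fun _ => (L ^ n)⁻¹)
  · rw [iteratedDeriv_const_smul_comp_const_mul (hh' k), mul_zero, hmonomial.iteratedDeriv_eq k,
      iteratedDeriv_pow_smul_const_zero, smul_inv_smul₀ (mod_cast n.factorial_ne_zero)]
    split_ifs with hk
    · rw [hk, mul_inv_cancel₀ (pow_ne_zero n hL.ne'), one_smul]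
    · rw [smul_zero]

variable [CompleteSpace F]

theorem exists_contDiff_iteratedDeriv_zero_eq (q : ℕ → F) :
    ∃ g : ℝ → F, ContDiff ℝ ∞ g ∧ ∀ n, iteratedDeriv n g 0 = q n := by
  choose f hf hsupp hsmall hzero using fun n =>
    exists_contDiff_hasCompactSupport_iteratedDeriv_zero_eq_ite n (q n)
      (ε := (1 / 2) ^ n) (by positivity)
  have hmajorant (k : ℕ) :
      ∃ v : ℕ → ℝ, Summable v ∧ ∀ n x, ‖iteratedDeriv k (f n) x‖ ≤ v n := by
    refine exists_summable_norm_le_of_eventually summable_geometric_two (fun n =>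
      exists_norm_iteratedDeriv_le_of_hasCompactSupport ((hf n).of_le (mod_cast le_top))
        (hsupp n)) ?_
    rw [Nat.cofinite_eq_atTop]
    filter_upwards [eventually_gt_atTop k] with n hn using hsmall n k hn
  choose v hv hfv using hmajorant
  refine ⟨fun x => ∑' n, f n x, contDiff_tsum_of_norm_iteratedDeriv_le hf (fun k _ => hv k)
    fun k n x _ => hfv k n x, fun k => ?_⟩
  calc iteratedDeriv k (fun x => ∑' n, f n x) 0
      = ∑' n, iteratedDeriv k (f n) 0 :=
        iteratedDeriv_tsum_apply hf (fun k _ => hv k) (fun k n x _ => hfv k n x) le_top 0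
    _ = ∑' n, if k = n then q n else 0 := by simp only [hzero]
    _ = q k := tsum_ite_eq' k q

theorem exists_contDiff_iteratedDeriv_eq (x₀ : ℝ) (q : ℕ → F) :
    ∃ g : ℝ → F, ContDiff ℝ ∞ g ∧ ∀ n, iteratedDeriv n g x₀ = q n := by
  obtain ⟨g, hg, hgq⟩ := exists_contDiff_iteratedDeriv_zero_eq q
  refine ⟨fun x => g (x - x₀), by fun_prop, fun n => ?_⟩
  simp only [iteratedDeriv_comp_sub_const, sub_self, hgq]

theorem stmt13_general {b c : ℝ} (hbc : b ≠ c) (q p : ℕ → F) :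
    ∃ g : ℝ → F, ContDiff ℝ ∞ g ∧ (∀ n, iteratedDeriv n g b = q n) ∧
      ∀ n, iteratedDeriv n g c = p n := by
  obtain ⟨u, hu, hub⟩ := exists_contDiff_iteratedDeriv_eq b q
  obtain ⟨w, hw, hwc⟩ := exists_contDiff_iteratedDeriv_eq c p
  obtain ⟨g, hg, hgu, hgw⟩ := exists_contDiff_eventuallyEq_eventuallyEq hbc hu hw
  exact ⟨g, hg, fun n => (hgu.iteratedDeriv_eq n).trans (hub n),
    fun n => (hgw.iteratedDeriv_eq n).trans (hwc n)⟩

end Borel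

/-- Two-point Borel interpolation: given `b < c` and arbitrary sequences
`(qₙ)`, `(pₙ)` of complex numbers, there is a function `g` smooth on `[b, c]` whose
one-sided derivatives at the endpoints satisfy `g⁽ⁿ⁾(b) = qₙ` and `g⁽ⁿ⁾(c) = pₙ`. -/
theorem stmt13 (b c : ℝ) (hbc : b < c) (q p : ℕ → ℂ) :
    ∃ g : ℝ → ℂ, ContDiffOn ℝ (⊤ : ℕ∞) g (Set.Icc b c) ∧
      (∀ n : ℕ, iteratedDerivWithin n g (Set.Icc b c) b = q n) ∧
      (∀ n : ℕ, iteratedDerivWithin n g (Set.Icc b c) c = p n) := by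
  obtain ⟨g, hg, hgb, hgc⟩ := stmt13_general hbc.ne q p
  have hwithin (n : ℕ) {x : ℝ} (hx : x ∈ Icc b c) :
      iteratedDerivWithin n g (Icc b c) x = iteratedDeriv n g x :=
    iteratedDerivWithin_eq_iteratedDeriv (uniqueDiffOn_Icc hbc)
      (hg.of_le (mod_cast le_top)).contDiffAt hx
  exact ⟨g, hg.contDiffOn, fun n => (hwithin n (left_mem_Icc.2 hbc.le)).trans (hgb n),
    fun n => (hwithin n (right_mem_Icc.2 hbc.le)).trans (hgc n)⟩
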